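/- Let 2 ≤ m ≤ n be integers with n ≡ m (mod m−1), and let G ≤ Sym(m). Then there exists a subgroup H ≤ Sym(n) and an injective group homomorphism from V_m(G) into V_n(H). -/

import Mathlib

namespace Paper

/-- Concatenation of a finite word with an infinite word. -/
def cat {n : ℕ} (w : List (Fin n)) (ζ : ℕ → Fin n) : ℕ → Fin n :=
  fun i => if h : i < w.length then w[i]'h else ζ (i - w.length)

/-- The finite word `w` is a prefix of the infinite word `ζ`. -/
def IsPref {n : ℕ} (w : List (Fin n)) (ζ : ℕ → Fin n) : Prop :=
  ∀ (i : ℕ) (h : i < w.length), w[i]'h = ζ i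

/-- An indexed family of finite words is a complete prefix code: every infinite
word has exactly one member of the family as a prefix. -/
def IsCPC {n : ℕ} {ι : Type} (P : ι → List (Fin n)) : Prop :=
  ∀ ζ : ℕ → Fin n, ∃! i : ι, IsPref (P i) ζ

/-- `f` is the map described by the table with domain code `P`, range code `Q` and
permutations `σ, τ`: it sends `pᵢ‖σᵢ(u)` to `qᵢ‖τᵢ(u)`. -/
def TableFun {n : ℕ} {ι : Type} (P Q : ι → List (Fin n))
    (σ τ : ι → Equiv.Perm (Fin n)) (f : (ℕ → Fin n) → (ℕ → Fin n)) : Prop :=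
  ∀ (i : ι) (u : ℕ → Fin n),
    f (cat (P i) (fun j => σ i (u j))) = cat (Q i) (fun j => τ i (u j))

/-- A table over a subgroup `H ≤ Sym(n)`. -/
structure Table (n : ℕ) (H : Subgroup (Equiv.Perm (Fin n))) where
  k : ℕ
  P : Fin k → List (Fin n)
  Q : Fin k → List (Fin n)
  σ : Fin k → Equiv.Perm (Fin n)
  τ : Fin k → Equiv.Perm (Fin n)
  σ_mem : ∀ i, σ i ∈ H
  τ_mem : ∀ i, τ i ∈ H
  hP : IsCPC P
  hQ : IsCPC Q

/-- The table `T` induces the map `f`. -/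
def Induces {n : ℕ} {H : Subgroup (Equiv.Perm (Fin n))} (T : Table n H)
    (f : (ℕ → Fin n) → (ℕ → Fin n)) : Prop :=
  TableFun T.P T.Q T.σ T.τ f

/-- The symmetric Thompson group `V_n(H)`, as the set of homeomorphisms of the
Cantor space `C_n = A_n^ℕ` induced by tables over `H`. -/
def Vset (n : ℕ) (H : Subgroup (Equiv.Perm (Fin n))) :
    Set ((ℕ → Fin n) ≃ₜ (ℕ → Fin n)) :=
  { f | ∃ T : Table n H, Induces T ⇑f }

open Equiv (Perm swap)

section Words

variable {n : ℕ}

theorem cat_nil (u : ℕ → Fin n) : cat [] u = u := by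
  funext i
  simp [cat]

theorem cat_cons_zero (a : Fin n) (w : List (Fin n)) (u : ℕ → Fin n) :
    cat (a :: w) u 0 = a := by
  simp [cat]

theorem cat_cons_succ (a : Fin n) (w : List (Fin n)) (u : ℕ → Fin n) (i : ℕ) :
    cat (a :: w) u (i + 1) = cat w u i := by
  simp [cat]

theorem cat_append (v w : List (Fin n)) (u : ℕ → Fin n) :
    cat (v ++ w) u = cat v (cat w u) := by
  induction v with
  | nil => simp [cat_nil]
  | cons a v ih =>
    funext i
    cases i with
    | zero => simp [cat_cons_zero]
    | succ i => simp [cat_cons_succ, ih]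

theorem cat_add_length (w : List (Fin n)) (u : ℕ → Fin n) (i : ℕ) :
    cat w u (w.length + i) = u i := by
  simp [cat]

theorem cat_injective (w : List (Fin n)) : Function.Injective (cat w) := by
  intro u v h
  funext i
  rw [← cat_add_length w u, h, cat_add_length]

theorem cat_eq_cat_of_length_eq {v w : List (Fin n)} (hl : v.length = w.length)
    {s t : ℕ → Fin n} (h : cat v s = cat w t) : v = w := by
  refine List.ext_getElem hl fun i h₁ h₂ => ?_
  simpa [cat, h₁, h₂] using congrFun h i

theorem comp_cat (g : Fin n → Fin n) (w : List (Fin n)) (u : ℕ → Fin n) :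
    g ∘ cat w u = cat (w.map g) (g ∘ u) := by
  funext i
  simp only [cat, Function.comp, List.length_map]
  split <;> simp

theorem isPref_cat (w : List (Fin n)) (u : ℕ → Fin n) : IsPref w (cat w u) := by
  intro i h
  simp [cat, h]

theorem IsPref.exists_eq_cat {w : List (Fin n)} {ζ : ℕ → Fin n} (h : IsPref w ζ) :
    ∃ u, ζ = cat w u := by
  refine ⟨fun i => ζ (w.length + i), ?_⟩
  funext i
  simp only [cat]
  split
  · exact (h i _).symm
  · congr 1
    omega

theorem isPref_append {v w : List (Fin n)} {u : ℕ → Fin n} :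
    IsPref (v ++ w) (cat v u) ↔ IsPref w u := by
  constructor
  · intro h
    obtain ⟨s, hs⟩ := h.exists_eq_cat
    rw [cat_append] at hs
    rw [cat_injective v hs]
    exact isPref_cat w s
  · intro h
    obtain ⟨s, rfl⟩ := h.exists_eq_cat
    rw [← cat_append]
    exact isPref_cat _ s

theorem IsPref.prefix_of_length_le {v w : List (Fin n)} {ζ : ℕ → Fin n} (hv : IsPref v ζ)
    (hw : IsPref w ζ) (hl : v.length ≤ w.length) : v <+: w := by
  refine List.prefix_iff_eq_take.2 (List.ext_getElem (by simp [hl]) fun i h₁ h₂ => ?_)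
  rw [List.getElem_take, hv i h₁, hw i (by omega)]

/-- The map `f` sends `p‖u` to `q‖g(u)` for every infinite word `u`. -/
def ActsOn (f : (ℕ → Fin n) → (ℕ → Fin n)) (p q : List (Fin n)) (g : Perm (Fin n)) : Prop :=
  ∀ u, f (cat p u) = cat q (g ∘ u)

theorem ActsOn.append {f : (ℕ → Fin n) → (ℕ → Fin n)} {p q : List (Fin n)} {g : Perm (Fin n)}
    (h : ActsOn f p q g) (w : List (Fin n)) : ActsOn f (p ++ w) (q ++ w.map g) g := by
  intro u
  rw [cat_append, h, comp_cat, cat_append]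

theorem ActsOn.comp {f f' : (ℕ → Fin n) → (ℕ → Fin n)} {p q r : List (Fin n)}
    {g g' : Perm (Fin n)} (h : ActsOn f p q g) (h' : ActsOn f' q r g') :
    ActsOn (f' ∘ f) p r (g' * g) := by
  intro u
  rw [Function.comp_apply, h, h']
  rfl

theorem length_le_of_cat_comp_eq (hn : 2 ≤ n) {v w : List (Fin n)} {g h : Perm (Fin n)}
    (H : ∀ u : ℕ → Fin n, cat v (g ∘ u) = cat w (h ∘ u)) : w.length ≤ v.length := by
  by_contra! hl
  have key (c : Fin n) : c = w[v.length] := by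
    have := congrFun (H fun _ => g.symm c) v.length
    simpa [cat, hl] using this
  have : (⟨0, by omega⟩ : Fin n) = ⟨1, by omega⟩ := (key _).trans (key _).symm
  simp at this

theorem ActsOn.unique (hn : 2 ≤ n) {f : (ℕ → Fin n) → (ℕ → Fin n)} {p q q' : List (Fin n)}
    {g g' : Perm (Fin n)} (h : ActsOn f p q g) (h' : ActsOn f p q' g') : q = q' ∧ g = g' := by
  have H (u : ℕ → Fin n) : cat q (g ∘ u) = cat q' (g' ∘ u) := (h u).symm.trans (h' u)
  have hq : q = q' := cat_eq_cat_of_length_eq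
    (le_antisymm (length_le_of_cat_comp_eq hn fun u => (H u).symm)
      (length_le_of_cat_comp_eq hn H)) (H fun _ => ⟨0, by omega⟩)
  subst hq
  refine ⟨rfl, Equiv.ext fun c => ?_⟩
  exact congrFun (cat_injective q (H fun _ => c)) 0

theorem TableFun.actsOn {ι : Type} {P Q : ι → List (Fin n)} {σ τ : ι → Perm (Fin n)}
    {f : (ℕ → Fin n) → (ℕ → Fin n)} (h : TableFun P Q σ τ f) (i : ι) :
    ActsOn f (P i) (Q i) (τ i * (σ i)⁻¹) := by
  intro u
  have := h i fun j => (σ i)⁻¹ (u j)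
  simpa [Function.comp_def] using this

/-- Around every point, `f` is a prefix replacement followed by a letterwise permutation. -/
def LocallyActs (f : (ℕ → Fin n) → (ℕ → Fin n)) : Prop :=
  ∀ ζ, ∃ p q g, IsPref p ζ ∧ ActsOn f p q g

theorem locallyActs_of_mem_Vset {G : Subgroup (Perm (Fin n))}
    {f : (ℕ → Fin n) ≃ₜ (ℕ → Fin n)} (hf : f ∈ Vset n G) : LocallyActs f := by
  intro ζ
  obtain ⟨T, hT⟩ := hf
  obtain ⟨i, hi, -⟩ := T.hP ζ
  exact ⟨_, _, _, hi, TableFun.actsOn hT i⟩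

theorem LocallyActs.exists_actsOn_actsOn {f f' : (ℕ → Fin n) → (ℕ → Fin n)}
    (hf : LocallyActs f) (hf' : LocallyActs f') (ζ : ℕ → Fin n) :
    ∃ p q r g g', IsPref p ζ ∧ ActsOn f p q g ∧ ActsOn f' q r g' := by
  obtain ⟨p, q, g, hp, hpq⟩ := hf ζ
  obtain ⟨u, rfl⟩ := hp.exists_eq_cat
  obtain ⟨r, s, g', hr, hrs⟩ := hf' (cat q (g ∘ u))
  rcases le_total r.length q.length with hl | hl
  · obtain ⟨w, rfl⟩ := hr.prefix_of_length_le (isPref_cat q _) hl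
    exact ⟨_, _, _, _, _, hp, hpq, hrs.append w⟩
  · obtain ⟨w, rfl⟩ := (isPref_cat q _).prefix_of_length_le hr hl
    rw [isPref_append] at hr
    have hw : IsPref (w.map g.symm) u := by
      intro i hi
      have := hr i (by simpa using hi)
      simp [this]
    have hpq := hpq.append (w.map g.symm)
    have hmap : (w.map g.symm).map g = w := by simp [Function.comp_def]
    rw [hmap] at hpq
    exact ⟨_, _, _, _, _, isPref_append.2 hw, hpq, hrs⟩

theorem LocallyActs.comp {f f' : (ℕ → Fin n) → (ℕ → Fin n)}
    (hf : LocallyActs f) (hf' : LocallyActs f') : LocallyActs (f' ∘ f) := fun ζ =>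
  let ⟨_, _, _, _, _, hp, hpq, hqr⟩ := hf.exists_actsOn_actsOn hf' ζ
  ⟨_, _, _, hp, hpq.comp hqr⟩

theorem continuous_cat_perm (w : List (Fin n)) (σ : Perm (Fin n)) :
    Continuous fun u : ℕ → Fin n => cat w fun j => σ (u j) := by
  refine continuous_pi fun i => ?_
  by_cases h : i < w.length
  · simpa [cat, h] using continuous_const
  · simp only [cat, h, dite_false]
    exact (continuous_of_discreteTopology (f := σ)).comp (continuous_apply (i - w.length))

/-- A complete prefix code together with permutations identifies the disjoint union of its
cones with the Cantor space. -/
theorem IsCPC.exists_homeomorph {ι : Type} [Finite ι] [TopologicalSpace ι] [DiscreteTopology ι]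
    {P : ι → List (Fin n)} (hP : IsCPC P) (σ : ι → Perm (Fin n)) :
    ∃ A : ι × (ℕ → Fin n) ≃ₜ (ℕ → Fin n), ∀ i u, A (i, u) = cat (P i) fun j => σ i (u j) := by
  let A : ι × (ℕ → Fin n) → (ℕ → Fin n) := fun x => cat (P x.1) fun j => σ x.1 (x.2 j)
  have hA : Continuous A := continuous_prod_of_discrete_left.2 fun i =>
    continuous_cat_perm (P i) (σ i)
  have hbij : Function.Bijective A := by
    constructor
    · rintro ⟨i, u⟩ ⟨j, v⟩ h
      have hij : i = j := (hP (A (i, u))).unique (isPref_cat _ _) (h ▸ isPref_cat _ _)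
      subst hij
      have := cat_injective _ h
      simp only [Prod.mk.injEq, true_and]
      funext t
      exact (σ i).injective (congrFun this t)
    · intro ζ
      obtain ⟨i, hi, -⟩ := hP ζ
      obtain ⟨u, rfl⟩ := hi.exists_eq_cat
      exact ⟨(i, fun j => (σ i)⁻¹ (u j)), by simp [A]⟩
  exact ⟨Continuous.homeoOfEquivCompactToT2 (f := Equiv.ofBijective A hbij) hA, fun _ _ => rfl⟩

/-- Every table indexed by a finite type induces a member of `V_n(Sym(n))`. -/
theorem exists_mem_Vset_top {ι : Type} [Finite ι] {P Q : ι → List (Fin n)} (hP : IsCPC P)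
    (hQ : IsCPC Q) (σ τ : ι → Perm (Fin n)) :
    ∃ F ∈ Vset n ⊤, TableFun P Q σ τ F := by
  let _ : TopologicalSpace ι := ⊥
  have : DiscreteTopology ι := ⟨rfl⟩
  obtain ⟨A, hA⟩ := hP.exists_homeomorph σ
  obtain ⟨B, hB⟩ := hQ.exists_homeomorph τ
  have hF : TableFun P Q σ τ (A.symm.trans B) := by
    intro i u
    rw [← hA, ← hB]
    simp
  obtain ⟨k, ⟨e⟩⟩ := Finite.exists_equiv_fin ι
  have reindex {R : ι → List (Fin n)} (hR : IsCPC R) : IsCPC (R ∘ e.symm) := fun ζ =>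
    (e.symm.bijective.existsUnique_iff (p := fun i => IsPref (R i) ζ)).1 (hR ζ)
  exact ⟨A.symm.trans B, ⟨⟨k, P ∘ e.symm, Q ∘ e.symm, σ ∘ e.symm, τ ∘ e.symm, fun _ => trivial,
    fun _ => trivial, reindex hP, reindex hQ⟩, fun i u => hF (e.symm i) u⟩, hF⟩

end Words

/-- A set `X` on which the symmetric group of the alphabet acts, with an equivariant
identification of `X` with a disjoint union of copies of itself indexed by the alphabet. -/
structure SelfSimilarSet (m : ℕ) (X : Type) where
  split : X ≃ Fin m × X
  act : Perm (Fin m) → X → X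
  act_mul : ∀ g h x, act (g * h) x = act g (act h x)
  split_act : ∀ g x, split (act g x) = (g (split x).1, act g (split x).2)
  /-- a point with prescribed address -/
  pt : (ℕ → Fin m) → X
  split_pt : ∀ ζ, split (pt ζ) = (ζ 0, pt fun j => ζ (j + 1))

namespace SelfSimilarSet

variable {m : ℕ} {X : Type} (S : SelfSimilarSet m X)

/-- The inclusion of the copy of `X` indexed by a finite word. -/
def incl (p : List (Fin m)) (x : X) : X :=
  p.foldr (fun c y => S.split.symm (c, y)) x

/-- The infinite word recording in which copies of `X` a point lies. -/
def address (x : X) (j : ℕ) : Fin m :=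
  (S.split ((fun y => (S.split y).2)^[j] x)).1

theorem incl_nil (x : X) : S.incl [] x = x := rfl

theorem incl_cons (c : Fin m) (p : List (Fin m)) (x : X) :
    S.incl (c :: p) x = S.split.symm (c, S.incl p x) := rfl

theorem incl_append (p q : List (Fin m)) (x : X) :
    S.incl (p ++ q) x = S.incl p (S.incl q x) := by
  simp [incl]

theorem incl_injective (p : List (Fin m)) : Function.Injective (S.incl p) := by
  induction p with
  | nil => exact fun _ _ h => h
  | cons c p ih =>
    intro x y h
    simpa [incl_cons, ih.eq_iff] using h

theorem address_zero (x : X) : S.address x 0 = (S.split x).1 := rfl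

theorem address_succ (x : X) (j : ℕ) : S.address x (j + 1) = S.address (S.split x).2 j := rfl

theorem address_incl (p : List (Fin m)) (x : X) : S.address (S.incl p x) = cat p (S.address x) := by
  induction p with
  | nil => rw [incl_nil, cat_nil]
  | cons c p ih =>
    funext j
    cases j with
    | zero => simp [address_zero, incl_cons, cat_cons_zero]
    | succ j => simp [address_succ, incl_cons, cat_cons_succ, ih]

theorem exists_eq_incl {p : List (Fin m)} {x : X} (h : IsPref p (S.address x)) :
    ∃ y, x = S.incl p y := by
  induction p generalizing x with
  | nil => exact ⟨x, rfl⟩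
  | cons c p ih =>
    have h0 : c = (S.split x).1 := h 0 (by simp)
    obtain ⟨y, hy⟩ := @ih (S.split x).2 fun i hi =>
      h (i + 1) (Nat.succ_lt_succ hi)
    exact ⟨y, by rw [incl_cons, ← hy, h0, Prod.mk.eta, Equiv.symm_apply_apply]⟩

theorem address_act (g : Perm (Fin m)) (x : X) : S.address (S.act g x) = g ∘ S.address x := by
  funext j
  induction j generalizing x with
  | zero => simp [address_zero, S.split_act]
  | succ j ih => simp [address_succ, S.split_act, ih]

theorem act_incl (g : Perm (Fin m)) (p : List (Fin m)) (x : X) :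
    S.act g (S.incl p x) = S.incl (p.map g) (S.act g x) := by
  induction p with
  | nil => rfl
  | cons c p ih =>
    apply S.split.injective
    simp [incl_cons, S.split_act, ih]

theorem address_pt (ζ : ℕ → Fin m) : S.address (S.pt ζ) = ζ := by
  funext j
  induction j generalizing ζ with
  | zero => simp [address_zero, S.split_pt]
  | succ j ih => simp [address_succ, S.split_pt, ih]

/-- The map `F` on `X` follows the prefix replacements performed by `f`. -/
def Follows (f : (ℕ → Fin m) → (ℕ → Fin m)) (F : X → X) : Prop :=
  ∀ p q g, ActsOn f p q g → ∀ x, F (S.incl p x) = S.incl q (S.act g x)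

variable {S}

theorem follows_of_forall_exists (hm : 2 ≤ m) {f : (ℕ → Fin m) → (ℕ → Fin m)} {F : X → X}
    (H : ∀ ζ, ∃ p q g, IsPref p ζ ∧ ActsOn f p q g ∧
      ∀ x, F (S.incl p x) = S.incl q (S.act g x)) : S.Follows f F := by
  intro p q h hpq x
  obtain ⟨p', q', g, hp', hf, hF⟩ := H (S.address (S.incl p x))
  have hp : IsPref p (S.address (S.incl p x)) := S.address_incl p x ▸ isPref_cat _ _
  rcases le_total p'.length p.length with hl | hl
  · obtain ⟨w, rfl⟩ := hp'.prefix_of_length_le hp hl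
    obtain ⟨rfl, rfl⟩ := hpq.unique hm (hf.append w)
    rw [S.incl_append, hF, S.act_incl, S.incl_append]
  · obtain ⟨w, rfl⟩ := hp.prefix_of_length_le hp' hl
    rw [S.address_incl, isPref_append] at hp'
    obtain ⟨y, rfl⟩ := S.exists_eq_incl hp'
    obtain ⟨rfl, rfl⟩ := hf.unique hm (hpq.append w)
    rw [← S.incl_append, hF, S.incl_append, S.act_incl]

theorem Follows.address_eq {f : (ℕ → Fin m) → (ℕ → Fin m)} (hf : LocallyActs f) {F : X → X}
    (hF : S.Follows f F) (x : X) : S.address (F x) = f (S.address x) := by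
  obtain ⟨p, q, g, hp, hpq⟩ := hf (S.address x)
  obtain ⟨y, rfl⟩ := S.exists_eq_incl hp
  rw [hF _ _ _ hpq, S.address_incl, S.address_incl, S.address_act, hpq]

theorem Follows.unique {f : (ℕ → Fin m) → (ℕ → Fin m)} (hf : LocallyActs f) {F F' : X → X}
    (hF : S.Follows f F) (hF' : S.Follows f F') : F = F' := by
  funext x
  obtain ⟨p, q, g, hp, hpq⟩ := hf (S.address x)
  obtain ⟨y, rfl⟩ := S.exists_eq_incl hp
  rw [hF _ _ _ hpq, hF' _ _ _ hpq]

theorem Follows.comp (hm : 2 ≤ m) {f f' : (ℕ → Fin m) → (ℕ → Fin m)} (hf : LocallyActs f)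
    (hf' : LocallyActs f') {F F' : X → X} (hF : S.Follows f F) (hF' : S.Follows f' F') :
    S.Follows (f' ∘ f) (F' ∘ F) := by
  refine follows_of_forall_exists hm fun ζ => ?_
  obtain ⟨p, q, r, g, g', hp, hpq, hqr⟩ := hf.exists_actsOn_actsOn hf' ζ
  refine ⟨p, r, g' * g, hp, hpq.comp hqr, fun x => ?_⟩
  rw [Function.comp_apply, hF _ _ _ hpq, hF' _ _ _ hqr, S.act_mul]

section Embed

variable {n : ℕ} {E W : Type} {S : SelfSimilarSet m (E × (ℕ → Fin n))}
  {B : W → List (Fin n)} {β : E → W}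

/-- The embedding of `E` copies of the Cantor space as cones of the Cantor space. -/
def embed (B : W → List (Fin n)) (β : E → W) (x : E × (ℕ → Fin n)) : ℕ → Fin n :=
  cat (B (β x.1)) x.2

theorem embed_injective (hB : IsCPC B) (hβ : Function.Injective β) :
    Function.Injective (embed B β) := by
  rintro ⟨e, u⟩ ⟨e', u'⟩ h
  obtain rfl : e = e' := hβ ((hB (embed B β (e, u))).unique (isPref_cat _ _)
    (h ▸ isPref_cat _ _))
  obtain rfl : u = u' := cat_injective _ h
  rfl

theorem isCPC_sum_elim (hB : IsCPC B) (hβ : Function.Injective β) {ι : Type}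
    {P : ι → List (Fin m)} (hP : IsCPC P) (κ : ι → Perm E) {N : ι → E → List (Fin n)}
    (hN : ∀ i e u, cat (N i e) u = embed B β (S.incl (P i) (κ i e, u))) :
    IsCPC (Sum.elim (fun x : ι × E => N x.1 x.2)
      (fun r : {w // w ∉ Set.range β} => B r)) := by
  intro ξ
  obtain ⟨w, hw, hwu⟩ := hB ξ
  have hpref {i e} (h : IsPref (N i e) ξ) :
      ∃ u, ξ = embed B β (S.incl (P i) (κ i e, u)) := by
    obtain ⟨u, rfl⟩ := h.exists_eq_cat
    exact ⟨u, hN i e u⟩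
  by_cases hr : w ∈ Set.range β
  · obtain ⟨e, rfl⟩ := hr
    obtain ⟨u, rfl⟩ := hw.exists_eq_cat
    obtain ⟨i, hi, hiu⟩ := hP (S.address (e, u))
    obtain ⟨⟨e₁, u₁⟩, hx⟩ := S.exists_eq_incl hi
    refine ⟨.inl (i, (κ i).symm e₁), ?_, ?_⟩
    · have := hN i ((κ i).symm e₁) u₁
      rw [Equiv.apply_symm_apply, ← hx] at this
      change IsPref _ (embed B β (e, u))
      rw [← this]
      exact isPref_cat _ _
    · rintro (⟨j, e₂⟩ | ⟨r, hr⟩) h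
      · obtain ⟨u₂, h⟩ := hpref h
        have h := embed_injective hB hβ (a₁ := (e, u)) h
        obtain rfl : j = i := hiu j (by
          change IsPref _ (S.address (e, u))
          rw [h, S.address_incl]; exact isPref_cat _ _)
        have := S.incl_injective _ (hx.symm.trans h)
        have h₁ : e₁ = κ j e₂ := congrArg Prod.fst this
        simp [h₁]
      · exact absurd ⟨e, (hwu r h).symm⟩ hr
  · refine ⟨.inr ⟨w, hr⟩, hw, ?_⟩
    rintro (⟨j, e₂⟩ | ⟨r, hr'⟩) h
    · obtain ⟨u₂, h⟩ := hpref h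
      exact absurd ⟨_, hwu _ (by rw [h]; exact isPref_cat _ _)⟩ hr
    · simp [hwu r h]

variable (S B β) in
/-- The map `F` lifts `f` to the image of the embedding and is the identity elsewhere. -/
def Lifts (f : (ℕ → Fin m) → (ℕ → Fin m)) (F : (ℕ → Fin n) → (ℕ → Fin n)) : Prop :=
  (∃ F₀, S.Follows f F₀ ∧ ∀ x, F (embed B β x) = embed B β (F₀ x)) ∧
    ∀ ξ, ξ ∉ Set.range (embed B β) → F ξ = ξ

theorem Lifts.unique {f : (ℕ → Fin m) → (ℕ → Fin m)} (hf : LocallyActs f)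
    {F F' : (ℕ → Fin n) → (ℕ → Fin n)} (hF : Lifts S B β f F) (hF' : Lifts S B β f F') :
    F = F' := by
  obtain ⟨⟨F₀, h₀, hF⟩, h₁⟩ := hF
  obtain ⟨⟨F₀', h₀', hF'⟩, h₁'⟩ := hF'
  funext ξ
  by_cases hξ : ξ ∈ Set.range (embed B β)
  · obtain ⟨x, rfl⟩ := hξ
    rw [hF, hF', h₀.unique hf h₀']
  · rw [h₁ _ hξ, h₁' _ hξ]

theorem Lifts.comp (hm : 2 ≤ m) {f f' : (ℕ → Fin m) → (ℕ → Fin m)} (hf : LocallyActs f)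
    (hf' : LocallyActs f') {F F' : (ℕ → Fin n) → (ℕ → Fin n)} (hF : Lifts S B β f F)
    (hF' : Lifts S B β f' F') : Lifts S B β (f' ∘ f) (F' ∘ F) := by
  obtain ⟨⟨F₀, h₀, hF⟩, h₁⟩ := hF
  obtain ⟨⟨F₀', h₀', hF'⟩, h₁'⟩ := hF'
  refine ⟨⟨_, h₀.comp hm hf hf' h₀', fun x => ?_⟩, fun ξ hξ => ?_⟩
  · simp [hF, hF']
  · simp [h₁ _ hξ, h₁' _ hξ]

theorem Lifts.eq_of_eq (hB : IsCPC B) (hβ : Function.Injective β)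
    {f f' : (ℕ → Fin m) → (ℕ → Fin m)} (hf : LocallyActs f)
    (hf' : LocallyActs f') {F : (ℕ → Fin n) → (ℕ → Fin n)} (hF : Lifts S B β f F)
    (hF' : Lifts S B β f' F) : f = f' := by
  obtain ⟨⟨F₀, h₀, hF⟩, -⟩ := hF
  obtain ⟨⟨F₀', h₀', hF'⟩, -⟩ := hF'
  funext ζ
  have h := embed_injective hB hβ ((hF (S.pt ζ)).symm.trans (hF' (S.pt ζ)))
  rw [← S.address_pt ζ, ← h₀.address_eq hf, ← h₀'.address_eq hf', h]

theorem exists_incl_eq (hsplit : ∀ c e, ∃ e' w, ∀ u, S.split.symm (c, (e, u)) = (e', cat w u))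
    (p : List (Fin m)) (e : E) : ∃ e' w, ∀ u, S.incl p (e, u) = (e', cat w u) := by
  induction p with
  | nil => exact ⟨e, [], fun u => by rw [S.incl_nil, cat_nil]⟩
  | cons c p ih =>
    obtain ⟨e', w, h⟩ := ih
    obtain ⟨e'', w', h'⟩ := hsplit c e'
    exact ⟨e'', w' ++ w, fun u => by rw [S.incl_cons, h, h', cat_append]⟩

theorem exists_mem_Vset_lifts (hm : 2 ≤ m) [Finite E] [Finite W]
    (hsplit : ∀ c e, ∃ e' w, ∀ u, S.split.symm (c, (e, u)) = (e', cat w u))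
    {κ : Perm (Fin m) → Perm E} {ρ : Perm (Fin m) → E → Perm (Fin n)}
    (hact : ∀ g e u, S.act g (e, u) = (κ g e, ρ g e ∘ u))
    (hB : IsCPC B) (hβ : Function.Injective β) {G : Subgroup (Perm (Fin m))}
    {f : (ℕ → Fin m) ≃ₜ (ℕ → Fin m)} (hf : f ∈ Vset m G) :
    ∃ F ∈ Vset n ⊤, Lifts S B β f F := by
  obtain ⟨T, hT⟩ := hf
  have hT := TableFun.actsOn hT
  set g := fun i => T.τ i * (T.σ i)⁻¹
  have hN (p : List (Fin m)) (e : E) : ∃ N, ∀ u, cat N u = embed B β (S.incl p (e, u)) := by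
    obtain ⟨e', w, h⟩ := exists_incl_eq hsplit p e
    exact ⟨B (β e') ++ w, fun u => by rw [h, cat_append, embed]⟩
  choose N hN using hN
  have hP := isCPC_sum_elim (S := S) hB hβ T.hP (fun _ => 1) (fun i e u => hN (T.P i) e u)
  have hQ := isCPC_sum_elim (S := S) hB hβ T.hQ (fun i => κ (g i))
    (fun i e u => hN (T.Q i) (κ (g i) e) u)
  obtain ⟨F, hF, hFT⟩ := exists_mem_Vset_top hP hQ (fun _ => 1)
    (Sum.elim (fun x => ρ (g x.1) x.2) fun _ => 1)
  have hincl (i : Fin T.k) (x : E × (ℕ → Fin n)) :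
      F (embed B β (S.incl (T.P i) x)) = embed B β (S.incl (T.Q i) (S.act (g i) x)) := by
    obtain ⟨e, u⟩ := x
    rw [hact, ← hN, ← hN]
    exact hFT (.inl (i, e)) u
  have hrange (x : E × (ℕ → Fin n)) : ∃ y, F (embed B β x) = embed B β y := by
    obtain ⟨i, hi, -⟩ := T.hP (S.address x)
    obtain ⟨y, rfl⟩ := S.exists_eq_incl hi
    exact ⟨_, hincl i y⟩
  choose F₀ hF₀ using hrange
  refine ⟨F, hF, ⟨F₀, ?_, hF₀⟩, fun ξ hξ => ?_⟩
  · refine follows_of_forall_exists hm fun ζ => ?_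
    obtain ⟨i, hi, -⟩ := T.hP ζ
    refine ⟨_, _, _, hi, hT i, fun x => embed_injective hB hβ ?_⟩
    rw [← hF₀, hincl]
  · obtain ⟨w, hw, -⟩ := hB ξ
    obtain ⟨u, rfl⟩ := hw.exists_eq_cat
    refine hFT (.inr ⟨w, ?_⟩) u
    rintro ⟨e, rfl⟩
    exact hξ ⟨(e, u), rfl⟩

/-- A self-similar set made of finitely many Cantor spaces, on which permutations act
letterwise, yields an embedding of symmetric Thompson groups. -/
theorem exists_hom_of_embed (hm : 2 ≤ m) [Finite E] [Finite W]
    (hsplit : ∀ c e, ∃ e' w, ∀ u, S.split.symm (c, (e, u)) = (e', cat w u))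
    {κ : Perm (Fin m) → Perm E} {ρ : Perm (Fin m) → E → Perm (Fin n)}
    (hact : ∀ g e u, S.act g (e, u) = (κ g e, ρ g e ∘ u))
    (hB : IsCPC B) (hβ : Function.Injective β) (G : Subgroup (Perm (Fin m))) :
    ∃ Φ : ((ℕ → Fin m) ≃ₜ (ℕ → Fin m)) → ((ℕ → Fin n) ≃ₜ (ℕ → Fin n)),
      (∀ f ∈ Vset m G, Φ f ∈ Vset n ⊤) ∧ Set.InjOn Φ (Vset m G) ∧
      ∀ f ∈ Vset m G, ∀ g ∈ Vset m G, Φ (f.trans g) = (Φ f).trans (Φ g) := by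
  classical
  let Φ (f : (ℕ → Fin m) ≃ₜ (ℕ → Fin m)) : (ℕ → Fin n) ≃ₜ (ℕ → Fin n) :=
    if h : ∃ F : (ℕ → Fin n) ≃ₜ (ℕ → Fin n), Lifts S B β f F then h.choose else .refl _
  have hΦ {f : (ℕ → Fin m) ≃ₜ (ℕ → Fin m)} {F : (ℕ → Fin n) ≃ₜ (ℕ → Fin n)}
      (h : Lifts S B β f F) : Lifts S B β f (Φ f) := by
    have h : ∃ F : (ℕ → Fin n) ≃ₜ (ℕ → Fin n), Lifts S B β f F := ⟨F, h⟩
    simp only [Φ, dif_pos h]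
    exact h.choose_spec
  have hlift {f} (hf : f ∈ Vset m G) : Lifts S B β f (Φ f) :=
    let ⟨_, _, h⟩ := exists_mem_Vset_lifts hm hsplit hact hB hβ hf
    hΦ h
  refine ⟨Φ, fun f hf => ?_, fun f hf f' hf' h => ?_, fun f hf f' hf' => ?_⟩
  · obtain ⟨F, hF, h⟩ := exists_mem_Vset_lifts hm hsplit hact hB hβ hf
    rwa [DFunLike.coe_injective ((hΦ h).unique (locallyActs_of_mem_Vset hf) h)]
  · exact DFunLike.coe_injective ((hlift hf).eq_of_eq hB hβ (locallyActs_of_mem_Vset hf)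
      (locallyActs_of_mem_Vset hf') (h ▸ hlift hf'))
  · have hf₁ := locallyActs_of_mem_Vset hf
    have hf₂ := locallyActs_of_mem_Vset hf'
    have h : Lifts S B β (f.trans f') ((Φ f).trans (Φ f')) :=
      (hlift hf).comp hm hf₁ hf₂ (hlift hf')
    exact DFunLike.coe_injective ((hΦ h).unique (hf₁.comp hf₂) h)

end Embed

end SelfSimilarSet

section Construction

variable {m k n : ℕ} [NeZero m] [NeZero k]

/-- Pairs of a copy and a letter, where only the first copy is paired with the letter `0`. -/
abbrev Letter (k m : ℕ) [NeZero m] [NeZero k] : Type :=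
  {x : Fin k × Fin m // x.2 = 0 → x.1 = 0}

theorem card_letter : Fintype.card (Letter k m) = k * (m - 1) + 1 := by
  let e : Letter k m ≃ Option (Fin k × {a : Fin m // a ≠ 0}) :=
    { toFun := fun x => if h : x.1.2 = 0 then none else some (x.1.1, ⟨x.1.2, h⟩)
      invFun := fun y => y.elim ⟨(0, 0), fun _ => rfl⟩
        fun z => ⟨(z.1, z.2.1), fun h => absurd h z.2.2⟩
      left_inv := by
        rintro ⟨⟨b, c⟩, h⟩
        by_cases hc : c = 0
        · have hb : b = 0 := h hc
          simp [hc, hb]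
        · simp [hc]
      right_inv := by
        rintro (_ | ⟨b, ⟨c, hc⟩⟩)
        · simp
        · simp [hc] }
  simp [Fintype.card_congr e]

/-- A permutation fixing `0` acts on the second coordinate of `Letter k m`. -/
def letterPerm (g : Perm (Fin m)) (hg : g 0 = 0) : Perm (Letter k m) :=
  Perm.subtypePerm (Equiv.prodCongr 1 g) fun x => by
    have : g x.2 = 0 ↔ x.2 = 0 := by
      constructor
      · intro h
        exact g.injective (h.trans hg.symm)
      · intro h
        rw [h, hg]
    simp [this]

/-- The permutation `g` seen in coordinates where `a` and `g a` are moved to `0`. -/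
def recenter (g : Perm (Fin m)) (a : Fin m) : Perm (Fin m) :=
  swap 0 (g a) * g * swap 0 a

theorem recenter_zero (g : Perm (Fin m)) (a : Fin m) : recenter g a 0 = 0 := by
  simp [recenter]

theorem recenter_mul (g h : Perm (Fin m)) (a : Fin m) :
    recenter (g * h) a = recenter g (h a) * recenter h a := by
  ext c
  simp [recenter]

theorem recenter_apply (g : Perm (Fin m)) (a c : Fin m) :
    swap 0 (g a) (recenter g a c) = g (swap 0 a c) := by
  simp [recenter]

/-- The permutation of the alphabet of size `n` induced by `recenter g a`. -/
def alphabetPerm (ε : Letter k m ≃ Fin n) (g : Perm (Fin m)) (a : Fin m) : Perm (Fin n) :=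
  ε.permCongr (letterPerm (recenter g a) (recenter_zero g a))

theorem symm_alphabetPerm (ε : Letter k m ≃ Fin n) (g : Perm (Fin m)) (a : Fin m) (z : Fin n) :
    (ε.symm (alphabetPerm ε g a z)).1 =
      ((ε.symm z).1.1, recenter g a (ε.symm z).1.2) := by
  simp [alphabetPerm, letterPerm, Equiv.permCongr_apply, Prod.map]

theorem alphabetPerm_mul (ε : Letter k m ≃ Fin n) (g h : Perm (Fin m)) (a : Fin m) :
    alphabetPerm ε (g * h) a = alphabetPerm ε g (h a) * alphabetPerm ε h a := by
  refine Equiv.ext fun z => ε.symm.injective (Subtype.ext ?_)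
  simp [symm_alphabetPerm, recenter_mul]

/-- Copies of the Cantor space indexed by `Fin m × Fin k`: the first copy for each `a : Fin m`
is split into its `n` cones, the others are left whole. -/
def splitEquiv (ε : Letter k m ≃ Fin n) :
    (Fin m × Fin k) × (ℕ → Fin n) ≃ Fin m × ((Fin m × Fin k) × (ℕ → Fin n)) where
  toFun x :=
    if x.1.2 = 0 then
      (swap 0 x.1.1 (ε.symm (x.2 0)).1.2,
        ((x.1.1, (ε.symm (x.2 0)).1.1), fun j => x.2 (j + 1)))
    else (x.1.1, x)
  invFun y :=
    if h : swap 0 y.2.1.1 y.1 = 0 → y.2.1.2 = 0 then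
      ((y.2.1.1, 0), cat [ε ⟨(y.2.1.2, swap 0 y.2.1.1 y.1), h⟩] y.2.2)
    else y.2
  left_inv := by
    rintro ⟨⟨a, b⟩, u⟩
    by_cases hb : b = 0
    · have h := (ε.symm (u 0)).2
      subst hb
      simp only [if_true, Equiv.swap_apply_self, dif_pos h]
      refine Prod.ext rfl ?_
      funext j
      cases j with
      | zero => simp [cat_cons_zero]
      | succ j => simp [cat_cons_succ, cat_nil]
    · simp [hb]
  right_inv := by
    rintro ⟨c, ⟨a, b⟩, u⟩
    by_cases h : swap 0 a c = 0 → b = 0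
    · simp [dif_pos h, cat_cons_zero, cat_cons_succ, cat_nil]
    · simp only [dif_neg h]
      push Not at h
      have : c = a := by simpa [Equiv.swap_apply_eq_iff] using h.1
      simp [h.2, this]

/-- The self-similar set given by `splitEquiv`. -/
def cantorCopies (ε : Letter k m ≃ Fin n) :
    SelfSimilarSet m ((Fin m × Fin k) × (ℕ → Fin n)) where
  split := splitEquiv ε
  act g x := ((g x.1.1, x.1.2), alphabetPerm ε g x.1.1 ∘ x.2)
  act_mul g h x := by
    rw [Perm.mul_apply, alphabetPerm_mul]
    rfl
  split_act g x := by
    obtain ⟨⟨a, b⟩, u⟩ := x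
    by_cases hb : b = 0
    · simp [splitEquiv, hb, symm_alphabetPerm, recenter_apply, Function.comp_def]
    · simp [splitEquiv, hb]
  pt ζ := ((0, 0), fun j => ε ⟨(0, ζ j), fun _ => rfl⟩)
  split_pt ζ := by simp [splitEquiv]

theorem exists_splitEquiv_symm_eq (ε : Letter k m ≃ Fin n) (c : Fin m) (e : Fin m × Fin k) :
    ∃ e' w, ∀ u, (splitEquiv ε).symm (c, (e, u)) = (e', cat w u) := by
  by_cases h : swap 0 e.1 c = 0 → e.2 = 0
  · exact ⟨(e.1, 0), [ε ⟨(e.2, swap 0 e.1 c), h⟩], fun u => dif_pos h⟩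
  · exact ⟨e, [], fun u => by rw [cat_nil]; exact dif_neg h⟩

theorem isCPC_pair : IsCPC fun x : Fin n × Fin n => [x.1, x.2] := by
  intro ζ
  refine ⟨(ζ 0, ζ 1), ?_, fun x hx => Prod.ext (hx 0 (by simp)) (hx 1 (by simp))⟩
  intro i hi
  match i, hi with
  | 0, _ => rfl
  | 1, _ => rfl

end Construction

/-- **Corollary.** Let `2 ≤ m ≤ n` with `n ≡ m (mod m-1)` and let
`G ≤ Sym(m)`.  Then there is a subgroup `H ≤ Sym(n)` such that `V_m(G)` embeds in
`V_n(H)`. -/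
theorem stmt11 (m n : ℕ) (hm : 2 ≤ m) (hmn : m ≤ n) (hmod : n ≡ m [MOD m - 1])
    (G : Subgroup (Equiv.Perm (Fin m))) :
    ∃ H : Subgroup (Equiv.Perm (Fin n)),
      ∃ Φ : ((ℕ → Fin m) ≃ₜ (ℕ → Fin m)) → ((ℕ → Fin n) ≃ₜ (ℕ → Fin n)),
        (∀ f ∈ Vset m G, Φ f ∈ Vset n H) ∧
        Set.InjOn Φ (Vset m G) ∧
        ∀ f ∈ Vset m G, ∀ g ∈ Vset m G, Φ (f.trans g) = (Φ f).trans (Φ g) := by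
  obtain ⟨d, hd⟩ := (Nat.modEq_iff_dvd' hmn).1 hmod.symm
  have hn : (d + 1) * (m - 1) + 1 = n := by
    have : (d + 1) * (m - 1) = (m - 1) * d + (m - 1) := by ring
    omega
  have hdn : d + 1 ≤ n := by nlinarith [show 1 ≤ m - 1 by omega]
  have : NeZero m := ⟨by omega⟩
  let ε : Letter (d + 1) m ≃ Fin n := Fintype.equivFinOfCardEq (card_letter.trans hn)
  exact ⟨⊤, SelfSimilarSet.exists_hom_of_embed (S := cantorCopies ε)
    (β := Prod.map (Fin.castLE hmn) (Fin.castLE hdn))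
    (κ := fun g => Equiv.prodCongr g 1) (ρ := fun g e => alphabetPerm ε g e.1)
    hm (exists_splitEquiv_symm_eq ε) (fun _ _ _ => rfl) isCPC_pair
    ((Fin.castLE_injective hmn).prodMap (Fin.castLE_injective hdn)) G⟩

end Paper
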